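/- arXiv:1512.02367 — 2 statements merged into one kernel-verified Lean document; each statement's English description precedes it below -/
import Mathlib

section
/- Suppose λ ∈ ρ + C, μ ∈ E, w ∈ W, and ‖λ − w(μ)‖ = ‖ρ_μ‖. Then w(μ) ∈ C and λ = w(μ) + ρ_{w(μ)}, i.e. λ − ρ(λ) = w(μ) − ρ(w(μ)). (This is the Weyl-group form of the statement that the orbits of type (h) at distance exactly ‖ρ^H‖ from a regular admissible orbit O are precisely the (h)-ancestors of O, i.e. their shift equals O.) -/
open scoped RealInnerProductSpace
open Finset

section RootReflection

variable {E : Type*} [NormedAddCommGroup E] [InnerProductSpace ℝ E]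

/-- The orthogonal reflection in the hyperplane perpendicular to `β`. -/
noncomputable def rootReflection (β : E) : E ≃ₗᵢ[ℝ] E := (ℝ ∙ β)ᗮ.reflection

theorem rootReflection_apply (β x : E) :
    rootReflection β x = x - (2 * ⟪x, β⟫ / ⟪β, β⟫) • β := by
  rw [rootReflection, Submodule.reflection_orthogonal_apply, Submodule.reflection_singleton_apply,
    real_inner_comm, real_inner_self_eq_norm_sq, neg_sub, two_smul, ← add_smul, mul_div_assoc, two_mul]
  rfl

theorem rootReflection_rootReflection (β x : E) :
    rootReflection β (rootReflection β x) = x :=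
  Submodule.reflection_reflection _ x

theorem inner_rootReflection_left (β x y : E) :
    ⟪rootReflection β x, y⟫ = ⟪x, rootReflection β y⟫ := by
  simp only [rootReflection_apply, inner_sub_left, inner_sub_right, inner_smul_left,
    inner_smul_right, real_inner_comm β y]
  simp only [conj_trivial]
  ring

theorem rootReflection_self (β : E) : rootReflection β β = -β :=
  Submodule.reflection_orthogonalComplement_singleton_eq_neg β

theorem inner_rootReflection_self (β x : E) : ⟪rootReflection β x, β⟫ = -⟪x, β⟫ := by
  rw [inner_rootReflection_left, rootReflection_self, inner_neg_right]

theorem inner_rootReflection_eq (β x y : E) :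
    ⟪rootReflection β x, y⟫ = ⟪x, y⟫ - 2 * ⟪x, β⟫ / ⟪β, β⟫ * ⟪β, y⟫ := by
  rw [rootReflection_apply, inner_sub_left, real_inner_smul_left]

/-- If reflecting in `β` moves `x` across the hyperplane `v^⊥` and `β` lies on its positive side,
then `x` lies on the positive side of `β^⊥`. -/
theorem inner_pos_of_inner_rootReflection_nonpos {β x v : E} (hβ : 0 < ⟪β, v⟫)
    (hx : 0 < ⟪x, v⟫) (h : ⟪rootReflection β x, v⟫ ≤ 0) : 0 < ⟪x, β⟫ := by
  by_contra! hle
  rw [inner_rootReflection_eq] at h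
  have h1 : 2 * ⟪x, β⟫ / ⟪β, β⟫ ≤ 0 :=
    div_nonpos_of_nonpos_of_nonneg (by linarith) real_inner_self_nonneg
  nlinarith

/-- Pairs of elements of `S` swapped by the reflection in `β` cancel in `∑ α ∈ S, ⟪α, β⟫`. -/
theorem inner_sum_eq_inner_sum_filter_rootReflection_notMem [DecidableEq E] (S : Finset E)
    (β : E) : ⟪∑ α ∈ S, α, β⟫ = ∑ α ∈ S with rootReflection β α ∉ S, ⟪α, β⟫ := by
  rw [sum_inner, ← Finset.sum_filter_add_sum_filter_not S (fun α => rootReflection β α ∈ S),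
    add_eq_right]
  refine Finset.sum_involution (fun α _ => rootReflection β α) ?_ ?_ ?_ ?_
  · intro α _
    rw [inner_rootReflection_self, add_neg_cancel]
  · intro α _ hne heq
    have := inner_rootReflection_self β α
    rw [heq] at this
    exact hne (by linarith)
  · intro α hα
    simp only [Finset.mem_filter, rootReflection_rootReflection] at hα ⊢
    exact hα.symm
  · intro α _
    exact rootReflection_rootReflection β α

/-- An isometry carrying `R` onto `R'` carries the sum of the `u`-positive elements of `R` to the
sum of the `w u`-positive elements of `R'`. -/
theorem map_sum_filter_inner_pos {R R' : Finset E} (w : E ≃ₗᵢ[ℝ] E)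
    (h : ∀ α, w α ∈ R' ↔ α ∈ R) (u : E) :
    w (∑ α ∈ R with 0 < ⟪α, u⟫, α) = ∑ α ∈ R' with 0 < ⟪α, w u⟫, α := by
  rw [map_sum]
  refine Finset.sum_bij (fun α _ => w α) ?_ (fun _ _ _ _ hab => w.injective hab) ?_ (fun _ _ => rfl)
  · intro α hα
    rw [Finset.mem_filter] at hα ⊢
    rwa [h, w.inner_map_map]
  · intro β hβ
    rw [Finset.mem_filter] at hβ
    refine ⟨w.symm β, ?_, w.apply_symm_apply β⟩
    rw [Finset.mem_filter, ← h, ← w.inner_map_map, w.apply_symm_apply]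
    exact hβ

/-- A set stable under the reflections in its members. -/
def IsReflectionStable (R : Finset E) : Prop :=
  ∀ α ∈ R, ∀ β ∈ R, rootReflection α β ∈ R

variable {R : Finset E}

theorem IsReflectionStable.neg_mem (hR : IsReflectionStable R) {α : E} (hα : α ∈ R) : -α ∈ R :=
  rootReflection_self α ▸ hR α hα α hα

theorem IsReflectionStable.rootReflection_mem_iff (hR : IsReflectionStable R) {α : E} (hα : α ∈ R)
    (β : E) : rootReflection α β ∈ R ↔ β ∈ R :=
  ⟨fun h => rootReflection_rootReflection α β ▸ hR α hα _ h, hR α hα β⟩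

/-- The sum of the positive roots pairs positively with every positive root. -/
theorem IsReflectionStable.inner_sum_pos (hR : IsReflectionStable R) {β v : E} (hβ : β ∈ R)
    (hβv : 0 < ⟪β, v⟫) : 0 < ⟪∑ α ∈ R with 0 < ⟪α, v⟫, α, β⟫ := by
  classical
  rw [inner_sum_eq_inner_sum_filter_rootReflection_notMem]
  refine Finset.sum_pos ?_ ⟨β, ?_⟩
  · intro α hα
    simp only [Finset.mem_filter, not_and, not_lt] at hα
    exact inner_pos_of_inner_rootReflection_nonpos hβv hα.1.2 (hα.2 (hR β hβ α hα.1.1))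
  · simp only [Finset.mem_filter, rootReflection_self, inner_neg_left, not_and, not_lt]
    exact ⟨⟨hβ, hβv⟩, fun _ => by linarith⟩

/-- All positive systems of `R` have a root sum of the same norm. -/
theorem IsReflectionStable.norm_sum_eq (hR : IsReflectionStable R) {v v' : E}
    (hv : ∀ α ∈ R, ⟪α, v⟫ ≠ 0) (hv' : ∀ α ∈ R, ⟪α, v'⟫ ≠ 0) :
    ‖∑ α ∈ R with 0 < ⟪α, v'⟫, α‖ = ‖∑ α ∈ R with 0 < ⟪α, v⟫, α‖ := by
  classical
  let F : Finset (Finset E) := R.powerset.filter fun A =>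
    ∃ u, (∀ α ∈ R, ⟪α, u⟫ ≠ 0) ∧ A = R.filter (fun α => 0 < ⟪α, u⟫) ∧
      ‖∑ α ∈ A, α‖ = ‖∑ α ∈ R with 0 < ⟪α, v'⟫, α‖
  have hF : F.Nonempty := ⟨R.filter fun α => 0 < ⟪α, v'⟫, by
    simp only [F, Finset.mem_filter, Finset.mem_powerset]
    exact ⟨Finset.filter_subset _ _, v', hv', rfl, trivial⟩⟩
  obtain ⟨A, hA, hmax⟩ := Finset.exists_max_image F (fun A => ⟪∑ α ∈ A, α, v⟫) hF
  simp only [F, Finset.mem_filter, Finset.mem_powerset] at hA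
  obtain ⟨-, u, hu, rfl, hnorm⟩ := hA
  have hdom : ∀ γ ∈ R, 0 < ⟪γ, v⟫ → 0 < ⟪γ, u⟫ := by
    intro γ hγ hγv
    have hmap := map_sum_filter_inner_pos (rootReflection γ) (hR.rootReflection_mem_iff hγ) u
    have hle := hmax (R.filter fun α => 0 < ⟪α, rootReflection γ u⟫) (by
      simp only [F, Finset.mem_filter, Finset.mem_powerset]
      refine ⟨Finset.filter_subset _ _, rootReflection γ u, fun α hα => ?_, rfl, ?_⟩
      · rw [← inner_rootReflection_left]
        exact hu _ (hR γ hγ α hα)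
      · rw [← hmap, LinearIsometryEquiv.norm_map, hnorm])
    rw [← hmap, inner_rootReflection_eq] at hle
    by_contra hneg
    have hlt : 0 < ⟪-γ, u⟫ := by
      rw [inner_neg_left]
      have := lt_of_le_of_ne (not_lt.mp hneg) (hu γ hγ)
      linarith
    have hpos := hR.inner_sum_pos (hR.neg_mem hγ) hlt
    rw [inner_neg_right] at hpos
    have hγγ : 0 < ⟪γ, γ⟫ := real_inner_self_pos.mpr (by rintro rfl; simp at hγv)
    have : 2 * ⟪∑ α ∈ R with 0 < ⟪α, u⟫, α, γ⟫ / ⟪γ, γ⟫ < 0 :=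
      div_neg_of_neg_of_pos (by linarith) hγγ
    nlinarith
  rw [← hnorm]
  congr 2
  refine Finset.filter_congr fun α hα => ⟨fun h => ?_, hdom α hα⟩
  by_contra hneg
  have h1 := lt_of_le_of_ne (not_lt.mp hneg) (hv α hα)
  have h2 := hdom (-α) (hR.neg_mem hα) (by rw [inner_neg_left]; linarith)
  rw [inner_neg_left] at h2
  linarith

/-- The roots orthogonal to `ν` are stable under reflections. -/
theorem IsReflectionStable.filter_inner_eq_zero (hR : IsReflectionStable R) (ν : E) :
    IsReflectionStable (R.filter fun α => ⟪α, ν⟫ = 0) := by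
  intro α hα β hβ
  rw [Finset.mem_filter] at hα hβ ⊢
  exact ⟨hR α hα.1 β hβ.1, by rw [inner_rootReflection_eq, hα.2, hβ.2]; ring⟩

theorem IsReflectionStable.apply_mem_iff_of_mem_closure (hR : IsReflectionStable R)
    {w : E ≃ₗᵢ[ℝ] E}
    (hw : w ∈ Subgroup.closure {s : E ≃ₗᵢ[ℝ] E | ∃ α ∈ R, ∀ x, s x = rootReflection α x}) (α : E) :
    w α ∈ R ↔ α ∈ R := by
  induction hw using Subgroup.closure_induction generalizing α with
  | mem s hs =>
    obtain ⟨γ, hγ, h⟩ := hs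
    rw [h, hR.rootReflection_mem_iff hγ]
  | one => rfl
  | mul a b _ _ ha hb => rw [LinearIsometryEquiv.coe_mul, Function.comp_apply, ha, hb]
  | inv a _ ha => rw [← ha, ← Function.comp_apply (f := a), ← LinearIsometryEquiv.coe_mul, mul_inv_cancel]; rfl

/-- For a positive root `β` orthogonal to `ν`, the positive roots not orthogonal to `ν` that the
reflection in `β` removes from that set pair positively with `β`. -/
theorem IsReflectionStable.inner_pos_of_rootReflection_notMem (hR : IsReflectionStable R)
    {v ν α β : E} (hβ : β ∈ R) (hβv : 0 < ⟪β, v⟫) (hβν : ⟪β, ν⟫ = 0)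
    (hα : α ∈ (R.filter fun α => 0 < ⟪α, v⟫).filter fun α => ¬ ⟪α, ν⟫ = 0)
    (h : rootReflection β α ∉ (R.filter fun α => 0 < ⟪α, v⟫).filter fun α => ¬ ⟪α, ν⟫ = 0) :
    0 < ⟪α, β⟫ := by
  simp only [Finset.mem_filter, not_and] at hα h
  refine inner_pos_of_inner_rootReflection_nonpos hβv hα.1.2 (not_lt.mp fun hlt => ?_)
  refine h ⟨hR β hβ α hα.1.1, hlt⟩ ?_
  rw [inner_rootReflection_eq, hβν, mul_zero, sub_zero]
  exact hα.2

theorem IsReflectionStable.inner_sum_filter_ne_nonneg (hR : IsReflectionStable R)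
    {v ν β : E} (hβ : β ∈ R) (hβv : 0 < ⟪β, v⟫) (hβν : ⟪β, ν⟫ = 0) :
    0 ≤ ⟪∑ α ∈ (R.filter fun α => 0 < ⟪α, v⟫).filter (fun α => ¬ ⟪α, ν⟫ = 0), α, β⟫ := by
  classical
  rw [inner_sum_eq_inner_sum_filter_rootReflection_notMem]
  refine Finset.sum_nonneg fun α hα => ?_
  rw [Finset.mem_filter] at hα
  exact (hR.inner_pos_of_rootReflection_notMem hβ hβv hβν hα.1 hα.2).le

theorem IsReflectionStable.rootReflection_mem_of_inner_sum_eq_zero (hR : IsReflectionStable R)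
    {v ν β : E} (hβ : β ∈ R) (hβv : 0 < ⟪β, v⟫) (hβν : ⟪β, ν⟫ = 0)
    (h0 : ⟪∑ α ∈ (R.filter fun α => 0 < ⟪α, v⟫).filter (fun α => ¬ ⟪α, ν⟫ = 0), α, β⟫ = 0)
    {α : E} (hα : α ∈ (R.filter fun α => 0 < ⟪α, v⟫).filter fun α => ¬ ⟪α, ν⟫ = 0) :
    rootReflection β α ∈ (R.filter fun α => 0 < ⟪α, v⟫).filter fun α => ¬ ⟪α, ν⟫ = 0 := by
  classical
  by_contra hnot
  rw [inner_sum_eq_inner_sum_filter_rootReflection_notMem] at h0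
  refine (Finset.sum_pos (fun γ hγ => ?_) ⟨α, Finset.mem_filter.mpr ⟨hα, hnot⟩⟩).ne' h0
  rw [Finset.mem_filter] at hγ
  exact hR.inner_pos_of_rootReflection_notMem hβ hβv hβν hγ.1 hγ.2

/-- A point `ν` at distance `‖ρ_ν‖` from a point `lam` of the shifted chamber satisfies
`lam = ν + ρ_ν`, and `ρ_ν` is orthogonal to `ρ - ρ_ν`. -/
theorem IsReflectionStable.eq_add_of_norm_sub_eq (hR : IsReflectionStable R) {v ν lam : E}
    (hlam : ∀ α ∈ R.filter (fun α => 0 < ⟪α, v⟫),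
      0 ≤ ⟪lam - (2 : ℝ)⁻¹ • ∑ α ∈ R with 0 < ⟪α, v⟫, α, α⟫)
    (hnorm : ‖lam - ν‖ =
      ‖(2 : ℝ)⁻¹ • ∑ α ∈ (R.filter fun α => 0 < ⟪α, v⟫).filter (fun α => ⟪α, ν⟫ = 0), α‖) :
    lam = ν + (2 : ℝ)⁻¹ • ∑ α ∈ (R.filter fun α => 0 < ⟪α, v⟫).filter (fun α => ⟪α, ν⟫ = 0), α ∧
      ⟪∑ α ∈ (R.filter fun α => 0 < ⟪α, v⟫).filter (fun α => ¬ ⟪α, ν⟫ = 0), α,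
        ∑ α ∈ (R.filter fun α => 0 < ⟪α, v⟫).filter (fun α => ⟪α, ν⟫ = 0), α⟫ = 0 := by
  rw [← Finset.sum_filter_add_sum_filter_not (R.filter fun α => 0 < ⟪α, v⟫)
    (fun α => ⟪α, ν⟫ = 0)] at hlam
  set σ := ∑ α ∈ (R.filter fun α => 0 < ⟪α, v⟫).filter (fun α => ⟪α, ν⟫ = 0), α with hσ
  set τ := ∑ α ∈ (R.filter fun α => 0 < ⟪α, v⟫).filter (fun α => ¬ ⟪α, ν⟫ = 0), α with hτ
  have hchamber : 0 ≤ ⟪lam - (2 : ℝ)⁻¹ • (σ + τ), σ⟫ := by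
    nth_rewrite 2 [hσ]
    rw [inner_sum]
    exact Finset.sum_nonneg fun α hα => hlam α (Finset.mem_of_mem_filter α hα)
  have horth : ⟪ν, σ⟫ = 0 := by
    rw [hσ, inner_sum]
    refine Finset.sum_eq_zero fun α hα => ?_
    rw [real_inner_comm]
    exact (Finset.mem_filter.mp hα).2
  have hτσ : 0 ≤ ⟪τ, σ⟫ := by
    rw [hσ, inner_sum]
    refine Finset.sum_nonneg fun β hβ => ?_
    simp only [Finset.mem_filter] at hβ
    exact hR.inner_sum_filter_ne_nonneg hβ.1.1 hβ.1.2 hβ.2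
  have hexpand : ‖lam - ν - (2 : ℝ)⁻¹ • σ‖ ^ 2 =
      2 * ‖(2 : ℝ)⁻¹ • σ‖ ^ 2 - ⟪lam, σ⟫ := by
    rw [norm_sub_sq_real, hnorm, real_inner_smul_right, inner_sub_left, horth]
    ring
  rw [inner_sub_left, real_inner_smul_left, inner_add_left] at hchamber
  rw [← real_inner_self_eq_norm_sq ((2 : ℝ)⁻¹ • σ), real_inner_smul_left,
    real_inner_smul_right] at hexpand
  have hsq := sq_nonneg ‖lam - ν - (2 : ℝ)⁻¹ • σ‖
  have hzero : ‖lam - ν - (2 : ℝ)⁻¹ • σ‖ ^ 2 = 0 := by linarith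
  refine ⟨?_, by linarith⟩
  rw [sq_eq_zero_iff, norm_eq_zero, sub_sub, sub_eq_zero] at hzero
  exact hzero

/-- If `ν + ρ_ν` is strictly dominant and `ρ_ν` is orthogonal to `ρ - ρ_ν`, then `ν` is strictly
positive on the positive roots not orthogonal to it. -/
theorem IsReflectionStable.inner_pos_of_add_dominant (hR : IsReflectionStable R) {v ν β : E}
    (hlam : ∀ α ∈ R.filter (fun α => 0 < ⟪α, v⟫), 0 < ⟪ν + (2 : ℝ)⁻¹ •
      ∑ α ∈ (R.filter fun α => 0 < ⟪α, v⟫).filter (fun α => ⟪α, ν⟫ = 0), α, α⟫)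
    (horth : ⟪∑ α ∈ (R.filter fun α => 0 < ⟪α, v⟫).filter (fun α => ¬ ⟪α, ν⟫ = 0), α,
      ∑ α ∈ (R.filter fun α => 0 < ⟪α, v⟫).filter (fun α => ⟪α, ν⟫ = 0), α⟫ = 0)
    (hβ : β ∈ (R.filter fun α => 0 < ⟪α, v⟫).filter fun α => ¬ ⟪α, ν⟫ = 0) :
    0 < ⟪ν, β⟫ := by
  set P₀ := (R.filter fun α => 0 < ⟪α, v⟫).filter (fun α => ⟪α, ν⟫ = 0) with hP₀
  set P₁ := (R.filter fun α => 0 < ⟪α, v⟫).filter (fun α => ¬ ⟪α, ν⟫ = 0) with hP₁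
  have hstable : ∀ γ ∈ P₀, ∀ α ∈ P₁, rootReflection γ α ∈ P₁ := by
    have hnonneg : ∀ γ ∈ P₀, 0 ≤ ⟪∑ α ∈ P₁, α, γ⟫ := fun γ hγ => by
      simp only [hP₀, Finset.mem_filter] at hγ
      exact hR.inner_sum_filter_ne_nonneg hγ.1.1 hγ.1.2 hγ.2
    rw [inner_sum, Finset.sum_eq_zero_iff_of_nonneg hnonneg] at horth
    intro γ hγ α hα
    have hzero := horth γ hγ
    simp only [hP₀, Finset.mem_filter] at hγ
    exact hR.rootReflection_mem_of_inner_sum_eq_zero hγ.1.1 hγ.1.2 hγ.2 hzero hα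
  -- Among the roots in question on the level set of `β`, take one minimizing the pairing with `ρ_ν`.
  obtain ⟨δ, hδ, hmin⟩ := Finset.exists_min_image (P₁.filter fun α => ⟪α, ν⟫ = ⟪β, ν⟫)
    (fun α => ⟪α, ∑ α ∈ P₀, α⟫) ⟨β, Finset.mem_filter.mpr ⟨hβ, rfl⟩⟩
  rw [Finset.mem_filter] at hδ
  have hδγ : ∀ γ ∈ P₀, ⟪δ, γ⟫ ≤ 0 := by
    intro γ hγ
    have hγ' := hγ
    simp only [hP₀, Finset.mem_filter] at hγ'
    obtain ⟨⟨hγR, hγv⟩, hγν⟩ := hγ'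
    have hle := hmin (rootReflection γ δ) (by
      rw [Finset.mem_filter, inner_rootReflection_eq, hγν, mul_zero, sub_zero]
      exact ⟨hstable γ hγ δ hδ.1, hδ.2⟩)
    have hpos := (hR.filter_inner_eq_zero ν).inner_sum_pos
      (Finset.mem_filter.mpr ⟨hγR, hγν⟩) hγv
    rw [Finset.filter_comm, ← hP₀, real_inner_comm] at hpos
    rw [inner_rootReflection_eq] at hle
    by_contra! hlt
    have hγγ : 0 < ⟪γ, γ⟫ := real_inner_self_pos.mpr (by rintro rfl; simp at hγv)
    have : 0 < 2 * ⟪δ, γ⟫ / ⟪γ, γ⟫ := by positivity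
    nlinarith
  have hδσ : ⟪∑ α ∈ P₀, α, δ⟫ ≤ 0 := by
    rw [sum_inner]
    exact Finset.sum_nonpos fun γ hγ => real_inner_comm γ δ ▸ hδγ γ hγ
  have hδlam := hlam δ (Finset.mem_of_mem_filter δ hδ.1)
  rw [inner_add_left, real_inner_smul_left, real_inner_comm, hδ.2, real_inner_comm] at hδlam
  linarith

end RootReflection

theorem orbit_distance_eq_ancestor
    {E : Type*} [NormedAddCommGroup E] [InnerProductSpace ℝ E] [FiniteDimensional ℝ E]
    (Δ : Finset E)
    (hΔ0 : (0 : E) ∉ Δ)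
    (hΔred : ∀ α ∈ Δ, ∀ t : ℝ, t • α ∈ Δ → t = 1 ∨ t = -1)
    (hΔrefl : ∀ α ∈ Δ, ∀ β ∈ Δ, β - (2 * ⟪β, α⟫ / ⟪α, α⟫) • α ∈ Δ)
    (hΔcrys : ∀ α ∈ Δ, ∀ β ∈ Δ, ∃ n : ℤ, 2 * ⟪β, α⟫ / ⟪α, α⟫ = (n : ℝ))
    (v : E) (hv : ∀ α ∈ Δ, ⟪α, v⟫ ≠ 0)
    (Δpos : Finset E) (hΔpos : Δpos = Δ.filter (fun α => 0 < ⟪α, v⟫))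
    (ρ : E) (hρ : ρ = (2 : ℝ)⁻¹ • ∑ α ∈ Δpos, α)    (W : Subgroup (E ≃ₗᵢ[ℝ] E))
    (hW : W = Subgroup.closure
      {s : E ≃ₗᵢ[ℝ] E | ∃ α ∈ Δ, ∀ x : E, s x = x - (2 * ⟪x, α⟫ / ⟪α, α⟫) • α})
    (lam μ : E)
    (hlam : ∀ α ∈ Δpos, 0 ≤ ⟪lam - ρ, α⟫)
    (ρμ : E) (hρμ : ρμ = (2 : ℝ)⁻¹ • ∑ α ∈ Δpos.filter (fun α => ⟪α, μ⟫ = 0), α)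
    (w : E ≃ₗᵢ[ℝ] E) (hw : w ∈ W)
    (heq : ‖lam - w μ‖ = ‖ρμ‖) :
    (∀ α ∈ Δpos, 0 ≤ ⟪w μ, α⟫) ∧
    lam = w μ + (2 : ℝ)⁻¹ • ∑ α ∈ Δpos.filter (fun α => ⟪α, w μ⟫ = 0), α ∧
    lam - (2 : ℝ)⁻¹ • ∑ α ∈ Δ.filter (fun α => 0 < ⟪α, lam⟫), α
      = w μ - (2 : ℝ)⁻¹ • ∑ α ∈ Δ.filter (fun α => 0 < ⟪α, w μ⟫), α := by
  have hR : IsReflectionStable Δ := fun α hα β hβ => by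
    rw [rootReflection_apply]
    exact hΔrefl α hα β hβ
  have hwΔ : ∀ α, w α ∈ Δ ↔ α ∈ Δ := by
    refine hR.apply_mem_iff_of_mem_closure ?_
    simp only [rootReflection_apply]
    exact hW ▸ hw
  have hstab : ∀ α, w α ∈ Δ.filter (fun α => ⟪α, w μ⟫ = 0) ↔
      α ∈ Δ.filter (fun α => ⟪α, μ⟫ = 0) := fun α => by
    rw [mem_filter, mem_filter, hwΔ, w.inner_map_map]
  subst hΔpos hρ hρμ
  have hnorm : ‖lam - w μ‖ = ‖(2 : ℝ)⁻¹ •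
      ∑ α ∈ (Δ.filter fun α => 0 < ⟪α, v⟫).filter (fun α => ⟪α, w μ⟫ = 0), α‖ := by
    rw [heq, norm_smul, norm_smul, filter_comm, filter_comm (fun α => 0 < ⟪α, v⟫),
      ← w.norm_map, map_sum_filter_inner_pos w hstab,
      (hR.filter_inner_eq_zero (w μ)).norm_sum_eq (v := v) (v' := w v)]
    · exact fun α hα => hv α (mem_of_mem_filter α hα)
    · intro α hα
      obtain ⟨β, rfl⟩ := w.surjective α
      rw [w.inner_map_map]
      exact hv β ((hwΔ β).mp (mem_of_mem_filter _ hα))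
  obtain ⟨hshift, horth⟩ := hR.eq_add_of_norm_sub_eq hlam hnorm
  have hlampos : ∀ α ∈ Δ.filter (fun α => 0 < ⟪α, v⟫), 0 < ⟪lam, α⟫ := fun α hα => by
    have hle := hlam α hα
    have hpos := hR.inner_sum_pos (mem_of_mem_filter α hα) (mem_filter.mp hα).2
    rw [inner_sub_left, real_inner_smul_left] at hle
    linarith
  have hdom : ∀ α ∈ (Δ.filter fun α => 0 < ⟪α, v⟫).filter (fun α => ¬ ⟪α, w μ⟫ = 0),
      0 < ⟪w μ, α⟫ :=
    fun α hα => hR.inner_pos_of_add_dominant (hshift ▸ hlampos) horth hα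
  have hnonneg : ∀ α ∈ Δ.filter (fun α => 0 < ⟪α, v⟫), 0 ≤ ⟪w μ, α⟫ := fun α hα => by
    by_cases h : ⟪α, w μ⟫ = 0
    · rw [real_inner_comm, h]
    · exact (hdom α (mem_filter.mpr ⟨hα, h⟩)).le
  refine ⟨hnonneg, hshift, ?_⟩
  have hposlam : Δ.filter (fun α => 0 < ⟪α, lam⟫) = Δ.filter (fun α => 0 < ⟪α, v⟫) := by
    refine filter_congr fun α hα => ⟨fun h => ?_, fun h => ?_⟩
    · by_contra hneg
      have h1 := lt_of_le_of_ne (not_lt.mp hneg) (hv α hα)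
      have h2 := hlampos (-α) (mem_filter.mpr ⟨hR.neg_mem hα, by rw [inner_neg_left]; linarith⟩)
      rw [inner_neg_right, real_inner_comm] at h2
      linarith
    · rw [real_inner_comm]
      exact hlampos α (mem_filter.mpr ⟨hα, h⟩)
  have hposμ : Δ.filter (fun α => 0 < ⟪α, w μ⟫) =
      (Δ.filter fun α => 0 < ⟪α, v⟫).filter (fun α => ¬ ⟪α, w μ⟫ = 0) := by
    rw [filter_filter]
    refine filter_congr fun α hα => ⟨fun h => ⟨?_, h.ne'⟩, fun h => ?_⟩
    · by_contra hneg
      have h1 := lt_of_le_of_ne (not_lt.mp hneg) (hv α hα)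
      have h2 := hnonneg (-α) (mem_filter.mpr ⟨hR.neg_mem hα, by rw [inner_neg_left]; linarith⟩)
      rw [inner_neg_right, real_inner_comm] at h2
      linarith
    · rw [real_inner_comm]
      exact hdom α (mem_filter.mpr ⟨mem_filter.mpr ⟨hα, h.1⟩, h.2⟩)
  rw [hposlam, hposμ, ← sum_filter_add_sum_filter_not (Δ.filter fun α => 0 < ⟪α, v⟫)
    (fun α => ⟪α, w μ⟫ = 0), smul_add]
  nth_rewrite 1 [hshift]
  abel
end

section
/- Let μ ∈ C and set λ = μ + ρ_μ (the shift of μ). Assume μ is admissible, i.e. (μ − ρ(μ), α∨) ∈ ℤ for every α ∈ Δ, and that λ is regular, i.e. (λ,α) ≠ 0 for every α ∈ Δ. Then λ ∈ ρ + C (λ lies in the shifted Weyl chamber), λ − ρ = μ − ρ(μ) (so λ is admissible), and (λ − ρ, α) = 0 for every α ∈ Δ⁺ with (α,μ) = 0 (λ − ρ lies in the closure of the face of C containing μ). -/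
open scoped RealInnerProductSpace
open Finset

/-- The pairing `(x, α∨) = 2 (x, α) / (α, α)` of a vector with the coroot of `α`. -/
noncomputable def corootPairing {E : Type*} [NormedAddCommGroup E] [InnerProductSpace ℝ E]
    (x α : E) : ℝ :=
  2 * ⟪x, α⟫ / ⟪α, α⟫

/-- A finite set of vectors forming a reduced crystallographic root system in its span. -/
structure IsReducedRootSystem {E : Type*} [NormedAddCommGroup E] [InnerProductSpace ℝ E]
    (Φ : Finset E) : Prop where
  zero_notMem : (0 : E) ∉ Φ
  reduced : ∀ α ∈ Φ, ∀ t : ℝ, t • α ∈ Φ → t = 1 ∨ t = -1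
  reflection_mem : ∀ α ∈ Φ, ∀ β ∈ Φ, β - corootPairing β α • α ∈ Φ
  integral : ∀ α ∈ Φ, ∀ β ∈ Φ, ∃ n : ℤ, corootPairing β α = n

section CorootPairing

variable {E : Type*} [NormedAddCommGroup E] [InnerProductSpace ℝ E]

lemma corootPairing_sub_left (x y α : E) :
    corootPairing (x - y) α = corootPairing x α - corootPairing y α := by
  simp only [corootPairing, inner_sub_left]; ring

lemma corootPairing_add_left (x y α : E) :
    corootPairing (x + y) α = corootPairing x α + corootPairing y α := by
  simp only [corootPairing, inner_add_left]; ring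

lemma corootPairing_neg_left (x α : E) : corootPairing (-x) α = -corootPairing x α := by
  simp only [corootPairing, inner_neg_left]; ring

lemma corootPairing_half_sum (s : Finset E) (α : E) :
    corootPairing ((2 : ℝ)⁻¹ • ∑ β ∈ s, β) α = 2⁻¹ * ∑ β ∈ s, corootPairing β α := by
  simp only [corootPairing, inner_smul_left, sum_inner, ← Finset.sum_div, ← Finset.mul_sum]
  simp only [conj_trivial]
  ring

lemma corootPairing_self {α : E} (hα : α ≠ 0) : corootPairing α α = 2 := by
  have : ⟪α, α⟫ ≠ 0 := inner_self_ne_zero.2 hα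
  simp only [corootPairing]; field_simp

lemma corootPairing_mul_inner_self {α : E} (hα : α ≠ 0) (x : E) :
    corootPairing x α * ⟪α, α⟫ = 2 * ⟪x, α⟫ := by
  have : ⟪α, α⟫ ≠ 0 := inner_self_ne_zero.2 hα
  simp only [corootPairing]; field_simp

lemma corootPairing_pos_iff {α : E} (hα : α ≠ 0) (x : E) :
    0 < corootPairing x α ↔ 0 < ⟪x, α⟫ := by
  have h : 0 < ⟪α, α⟫ := real_inner_self_pos.2 hα
  rw [corootPairing, div_pos_iff_of_pos_right h]
  constructor <;> intro <;> linarith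

lemma corootPairing_nonneg_iff {α : E} (hα : α ≠ 0) (x : E) :
    0 ≤ corootPairing x α ↔ 0 ≤ ⟪x, α⟫ := by
  have h : 0 < ⟪α, α⟫ := real_inner_self_pos.2 hα
  rw [corootPairing, le_div_iff₀ h, zero_mul]
  constructor <;> intro <;> linarith

lemma corootPairing_eq_zero_iff {α : E} (hα : α ≠ 0) (x : E) :
    corootPairing x α = 0 ↔ ⟪x, α⟫ = 0 := by
  have h : ⟪α, α⟫ ≠ 0 := inner_self_ne_zero.2 hα
  rw [corootPairing, div_eq_zero_iff, or_iff_left h, mul_eq_zero_iff_left two_ne_zero]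

lemma corootPairing_reflection {α : E} (hα : α ≠ 0) (x : E) :
    corootPairing (x - corootPairing x α • α) α = -corootPairing x α := by
  have h : ⟪α, α⟫ ≠ 0 := inner_self_ne_zero.2 hα
  rw [corootPairing_sub_left]
  have : corootPairing (corootPairing x α • α) α = corootPairing x α * 2 := by
    rw [corootPairing, inner_smul_left, conj_trivial]; field_simp
  rw [this]; ring

lemma reflection_reflection {α : E} (hα : α ≠ 0) (x : E) :
    (x - corootPairing x α • α) - corootPairing (x - corootPairing x α • α) α • α = x := by
  rw [corootPairing_reflection hα]; module

lemma inner_reflection_eq_inner_reflection (α x y : E) :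
    ⟪x - corootPairing x α • α, y⟫ = ⟪x, y - corootPairing y α • α⟫ := by
  simp only [inner_sub_left, inner_sub_right, inner_smul_left, inner_smul_right, conj_trivial,
    corootPairing, real_inner_comm α y]
  ring

lemma norm_reflection {α : E} (hα : α ≠ 0) (x : E) :
    ‖x - corootPairing x α • α‖ = ‖x‖ := by
  rw [norm_eq_sqrt_real_inner, norm_eq_sqrt_real_inner (F := E) x,
    inner_reflection_eq_inner_reflection α, reflection_reflection hα]

/-- Reflecting the first argument of the pairing is the same as reflecting the root. -/
lemma corootPairing_reflection_left {α : E} (hα : α ≠ 0) (x β : E) :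
    corootPairing (x - corootPairing x α • α) β =
      corootPairing x (β - corootPairing β α • α) := by
  rw [corootPairing.eq_1 _ β, corootPairing.eq_1 x (β - _),
    inner_reflection_eq_inner_reflection α x,
    inner_reflection_eq_inner_reflection α β, reflection_reflection hα]

end CorootPairing

namespace IsReducedRootSystem

variable {E : Type*} [NormedAddCommGroup E] [InnerProductSpace ℝ E] {Φ : Finset E}

lemma ne_zero (hΦ : IsReducedRootSystem Φ) {α : E} (hα : α ∈ Φ) : α ≠ 0 :=
  fun h => hΦ.zero_notMem (h ▸ hα)

lemma neg_mem (hΦ : IsReducedRootSystem Φ) {α : E} (hα : α ∈ Φ) : -α ∈ Φ := by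
  have h := hΦ.reflection_mem α hα α hα
  rw [corootPairing_self (hΦ.ne_zero hα)] at h
  convert h using 1
  module

/-- The roots orthogonal to a fixed vector form a root system. -/
lemma filter_inner_eq_zero (hΦ : IsReducedRootSystem Φ) (μ : E) :
    IsReducedRootSystem (Φ.filter fun α => ⟪α, μ⟫ = 0) where
  zero_notMem h := hΦ.zero_notMem (mem_filter.1 h).1
  reduced α hα t ht := hΦ.reduced α (mem_filter.1 hα).1 t (mem_filter.1 ht).1
  reflection_mem α hα β hβ := by
    rw [mem_filter] at hα hβ ⊢
    refine ⟨hΦ.reflection_mem α hα.1 β hβ.1, ?_⟩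
    simp [inner_sub_left, inner_smul_left, hα.2, hβ.2]
  integral α hα β hβ := hΦ.integral α (mem_filter.1 hα).1 β (mem_filter.1 hβ).1

lemma sub_mem_of_inner_pos (hΦ : IsReducedRootSystem Φ) {α β : E} (hα : α ∈ Φ) (hβ : β ∈ Φ)
    (hne : ∀ t : ℝ, β ≠ t • α) (hpos : 0 < ⟪β, α⟫) : β - α ∈ Φ := by
  have hα0 := hΦ.ne_zero hα
  have hβ0 := hΦ.ne_zero hβ
  obtain ⟨m, hm⟩ := hΦ.integral α hα β hβ
  obtain ⟨n, hn⟩ := hΦ.integral β hβ α hα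
  have hm0 : 0 < m := by
    have := (corootPairing_pos_iff hα0 β).2 hpos
    rw [hm] at this; exact_mod_cast this
  have hn0 : 0 < n := by
    have := (corootPairing_pos_iff hβ0 α).2 (by rwa [real_inner_comm])
    rw [hn] at this; exact_mod_cast this
  have ha : 0 < ⟪α, α⟫ := real_inner_self_pos.2 hα0
  have hb : 0 < ⟪β, β⟫ := real_inner_self_pos.2 hβ0
  have hcs : ⟪β, α⟫ * ⟪β, α⟫ < ⟪α, α⟫ * ⟪β, β⟫ := by
    have hw : 0 < ⟪β - (⟪β, α⟫ / ⟪α, α⟫) • α, β - (⟪β, α⟫ / ⟪α, α⟫) • α⟫ :=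
      real_inner_self_pos.2 (sub_ne_zero.2 (hne _))
    have he : ⟪β - (⟪β, α⟫ / ⟪α, α⟫) • α, β - (⟪β, α⟫ / ⟪α, α⟫) • α⟫ =
        ⟪β, β⟫ - ⟪β, α⟫ * ⟪β, α⟫ / ⟪α, α⟫ := by
      simp only [inner_sub_left, inner_sub_right, inner_smul_left, inner_smul_right,
        conj_trivial, real_inner_comm β α]
      field_simp
      ring
    rw [he, sub_pos, div_lt_iff₀ ha] at hw
    linarith
  have hmn : m * n < 4 := by
    have h1 := corootPairing_mul_inner_self hα0 β
    have h2 := corootPairing_mul_inner_self hβ0 α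
    rw [hm] at h1
    rw [hn, real_inner_comm β α] at h2
    have h3 : ((m : ℝ) * n) * (⟪α, α⟫ * ⟪β, β⟫) < 4 * (⟪α, α⟫ * ⟪β, β⟫) := by
      calc ((m : ℝ) * n) * (⟪α, α⟫ * ⟪β, β⟫) = (m * ⟪α, α⟫) * (n * ⟪β, β⟫) := by ring
        _ = 4 * (⟪β, α⟫ * ⟪β, α⟫) := by rw [h1, h2]; ring
        _ < _ := by linarith
    exact_mod_cast lt_of_mul_lt_mul_right h3 (mul_pos ha hb).le
  have hcases : m = 1 ∨ n = 1 := by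
    by_contra! h
    have h1 : 2 ≤ m := by omega
    have h2 : 2 ≤ n := by omega
    nlinarith
  rcases hcases with rfl | rfl
  · simpa [hm] using hΦ.reflection_mem α hα β hβ
  · simpa [hn] using hΦ.neg_mem (hΦ.reflection_mem β hβ α hα)

/-- An indecomposable positive root `α` cannot satisfy `β + γ = k α` with `(β, α∨) = k` for
positive roots `β`, `γ` not proportional to it. -/
lemma add_ne_smul_of_indecomposable (hΦ : IsReducedRootSystem Φ) {v : E}
    (hv : ∀ α ∈ Φ, ⟪α, v⟫ ≠ 0) {α : E} (hα : α ∈ Φ) (hαv : 0 < ⟪α, v⟫)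
    (hind : ∀ β ∈ Φ, ∀ γ ∈ Φ, 0 < ⟪β, v⟫ → 0 < ⟪γ, v⟫ → β + γ ≠ α) (k : ℤ) :
    ∀ β ∈ Φ, ∀ γ ∈ Φ, 0 < ⟪β, v⟫ → 0 < ⟪γ, v⟫ → (∀ t : ℝ, β ≠ t • α) →
      corootPairing β α = k → β + γ ≠ (k : ℝ) • α := by
  have hα0 := hΦ.ne_zero hα
  have key : ∀ n : ℕ, ∀ k : ℤ, k ≤ n → ∀ β ∈ Φ, ∀ γ ∈ Φ, 0 < ⟪β, v⟫ → 0 < ⟪γ, v⟫ →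
      (∀ t : ℝ, β ≠ t • α) → corootPairing β α = k → β + γ ≠ (k : ℝ) • α := by
    intro n
    induction n with
    | zero =>
      intro k hk β _ γ _ hβv hγv _ _ heq
      have h := congrArg (fun x => ⟪x, v⟫) heq
      simp only [inner_add_left, inner_smul_left, conj_trivial] at h
      have hk' : (k : ℝ) ≤ 0 := by exact_mod_cast hk
      nlinarith
    | succ n ih =>
      intro k hk β hβ γ hγ hβv hγv hne hβk heq
      rcases le_or_gt k 0 with hk0 | hk0
      · exact ih k (by omega) β hβ γ hγ hβv hγv hne hβk heq
      have hk0' : (0 : ℝ) < k := by exact_mod_cast hk0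
      have hγ_eq : γ = (k : ℝ) • α - β := by rw [← heq]; abel
      have hγk : corootPairing γ α = k := by
        have h := corootPairing_reflection hα0 β
        rw [hβk, ← neg_inj, ← corootPairing_neg_left, neg_neg, neg_sub, ← hγ_eq] at h
        exact h
      have hγne : ∀ t : ℝ, γ ≠ t • α := by
        intro t ht
        apply hne (k - t)
        rw [sub_smul, ← ht, ← heq]; abel
      have step : ∀ δ ∈ Φ, 0 < ⟪δ, v⟫ → (∀ t : ℝ, δ ≠ t • α) → corootPairing δ α = k →
          δ - α ∈ Φ ∧ 0 < ⟪δ - α, v⟫ := by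
        intro δ hδ hδv hδne hδk
        have hmem := hΦ.sub_mem_of_inner_pos hα hδ hδne
          ((corootPairing_pos_iff hα0 δ).1 (hδk ▸ hk0'))
        refine ⟨hmem, ?_⟩
        by_contra hneg
        have hlt := lt_of_le_of_ne (not_lt.1 hneg) (hv _ hmem)
        have hmem' := hΦ.neg_mem hmem
        refine hind δ hδ _ hmem' hδv ?_ (by abel)
        rw [inner_neg_left]; linarith
      obtain ⟨hβ', hβv'⟩ := step β hβ hβv hne hβk
      obtain ⟨hγ', hγv'⟩ := step γ hγ hγv hγne hγk
      refine ih (k - 2) (by push_cast at hk; omega) _ hβ' _ hγ' hβv' hγv' ?_ ?_ ?_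
      · intro t ht
        apply hne (t + 1)
        rw [add_smul, ← ht]; module
      · rw [corootPairing_sub_left, hβk, corootPairing_self hα0]; push_cast; ring
      · rw [hγ_eq]; push_cast; module
  exact key k.toNat k (Int.self_le_toNat k)

/-- The reflection in an indecomposable positive root keeps all other positive roots positive. -/
lemma inner_reflection_pos_of_indecomposable (hΦ : IsReducedRootSystem Φ) {v : E}
    (hv : ∀ α ∈ Φ, ⟪α, v⟫ ≠ 0) {α β : E} (hα : α ∈ Φ) (hαv : 0 < ⟪α, v⟫)
    (hind : ∀ β ∈ Φ, ∀ γ ∈ Φ, 0 < ⟪β, v⟫ → 0 < ⟪γ, v⟫ → β + γ ≠ α)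
    (hβ : β ∈ Φ) (hβv : 0 < ⟪β, v⟫) (hne : β ≠ α) :
    0 < ⟪β - corootPairing β α • α, v⟫ := by
  by_contra hneg
  have hmem := hΦ.reflection_mem α hα β hβ
  have hlt := lt_of_le_of_ne (not_lt.1 hneg) (hv _ hmem)
  obtain ⟨k, hk⟩ := hΦ.integral α hα β hβ
  refine hΦ.add_ne_smul_of_indecomposable hv hα hαv hind k β hβ _ (hΦ.neg_mem hmem) hβv ?_ ?_ hk ?_
  · rw [inner_neg_left]; linarith
  · rintro t rfl
    rcases hΦ.reduced α hα t hβ with rfl | rfl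
    · simp at hne
    · rw [neg_one_smul, inner_neg_left] at hβv; linarith
  · rw [hk]; abel

lemma corootPairing_half_sum_of_indecomposable (hΦ : IsReducedRootSystem Φ) {v : E}
    (hv : ∀ α ∈ Φ, ⟪α, v⟫ ≠ 0) {α : E} (hα : α ∈ Φ) (hαv : 0 < ⟪α, v⟫)
    (hind : ∀ β ∈ Φ, ∀ γ ∈ Φ, 0 < ⟪β, v⟫ → 0 < ⟪γ, v⟫ → β + γ ≠ α) :
    corootPairing ((2 : ℝ)⁻¹ • ∑ β ∈ Φ.filter (fun β => 0 < ⟪β, v⟫), β) α = 1 := by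
  classical
  have hα0 := hΦ.ne_zero hα
  have hmem : α ∈ Φ.filter (fun β => 0 < ⟪β, v⟫) := mem_filter.2 ⟨hα, hαv⟩
  rw [corootPairing_half_sum, ← Finset.add_sum_erase _ _ hmem, corootPairing_self hα0]
  have hzero : ∑ β ∈ (Φ.filter (fun β => 0 < ⟪β, v⟫)).erase α, corootPairing β α = 0 := by
    refine Finset.sum_involution (fun β _ => β - corootPairing β α • α) ?_ ?_ ?_ ?_
    · intro β _
      rw [corootPairing_reflection hα0]; ring
    · intro β _ hβ h
      rw [sub_eq_self, smul_eq_zero] at h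
      exact h.elim hβ hα0
    · intro β hβ
      simp only [mem_erase, mem_filter] at hβ ⊢
      refine ⟨fun h => ?_, hΦ.reflection_mem α hα β hβ.2.1,
        hΦ.inner_reflection_pos_of_indecomposable hv hα hαv hind hβ.2.1 hβ.2.2 hβ.1⟩
      have h1 := reflection_reflection hα0 β
      rw [h, corootPairing_self hα0] at h1
      have h2 : β = -α := by rw [← h1]; module
      have h3 := hβ.2.2
      rw [h2, inner_neg_left] at h3
      linarith
    · intro β _
      exact reflection_reflection hα0 β
  rw [hzero]; norm_num

/-- A vector pairing to at least one with every positive coroot lies in the chamber shifted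
by the half sum of positive roots. -/
lemma inner_sub_half_sum_nonneg (hΦ : IsReducedRootSystem Φ) {v : E}
    (hv : ∀ α ∈ Φ, ⟪α, v⟫ ≠ 0) {d : E}
    (hd : ∀ α ∈ Φ, 0 < ⟪α, v⟫ → 1 ≤ corootPairing d α) :
    ∀ α ∈ Φ.filter (fun β => 0 < ⟪β, v⟫),
      0 ≤ ⟪d - (2 : ℝ)⁻¹ • ∑ β ∈ Φ.filter (fun β => 0 < ⟪β, v⟫), β, α⟫ := by
  have hwf : (Φ.filter (fun β => 0 < ⟪β, v⟫) : Set E).WellFoundedOn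
      (fun β α => ⟪β, v⟫ < ⟪α, v⟫) := by
    have : IsStrictOrder E (fun β α => ⟪β, v⟫ < ⟪α, v⟫) :=
      { irrefl := fun _ => lt_irrefl _
        trans := fun _ _ _ => lt_trans }
    exact (Finset.finite_toSet _).wellFoundedOn
  intro α hα
  refine hwf.induction (P := fun α =>
    0 ≤ ⟪d - (2 : ℝ)⁻¹ • ∑ β ∈ Φ.filter (fun β => 0 < ⟪β, v⟫), β, α⟫) hα ?_
  intro α hα ih
  simp only [mem_coe, mem_filter] at hα ih
  by_cases hind : ∀ β ∈ Φ, ∀ γ ∈ Φ, 0 < ⟪β, v⟫ → 0 < ⟪γ, v⟫ → β + γ ≠ α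
  · rw [← corootPairing_nonneg_iff (hΦ.ne_zero hα.1), corootPairing_sub_left,
      hΦ.corootPairing_half_sum_of_indecomposable hv hα.1 hα.2 hind]
    linarith [hd α hα.1 hα.2]
  · push Not at hind
    obtain ⟨β, hβ, γ, hγ, hβv, hγv, rfl⟩ := hind
    rw [inner_add_right]
    refine add_nonneg (ih β ⟨hβ, hβv⟩ ?_) (ih γ ⟨hγ, hγv⟩ ?_) <;>
      rw [inner_add_left] <;> linarith

/-- The half sum of positive roots pairs integrally with all coroots. -/
lemma exists_int_corootPairing_half_sum (hΦ : IsReducedRootSystem Φ) {v : E}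
    (hv : ∀ α ∈ Φ, ⟪α, v⟫ ≠ 0) {α : E} (hα : α ∈ Φ) :
    ∃ n : ℤ, corootPairing ((2 : ℝ)⁻¹ • ∑ β ∈ Φ.filter (fun β => 0 < ⟪β, v⟫), β) α = n := by
  classical
  have hα0 := hΦ.ne_zero hα
  have hchoice : ∀ β : E, ∃ n : ℤ, β ∈ Φ → corootPairing β α = n := by
    intro β
    by_cases hβ : β ∈ Φ
    · obtain ⟨n, hn⟩ := hΦ.integral α hα β hβ
      exact ⟨n, fun _ => hn⟩
    · exact ⟨0, fun h => absurd h hβ⟩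
  choose n hn using hchoice
  set s : E → E := fun β => β - corootPairing β α • α with hs
  have hss : ∀ β, s (s β) = β := reflection_reflection hα0
  have hsneg : ∀ β, s (-β) = -s β := by
    intro β
    simp only [hs, corootPairing_neg_left]; module
  set τ : E → E := fun β => if 0 < ⟪s β, v⟫ then s β else -s β with hτ
  have hsmem : ∀ β ∈ Φ, s β ∈ Φ := hΦ.reflection_mem α hα
  have hτmem : ∀ β ∈ Φ, τ β ∈ Φ ∧ 0 < ⟪τ β, v⟫ := by
    intro β hβ
    simp only [hτ]
    split_ifs with h
    · exact ⟨hsmem β hβ, h⟩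
    · have := lt_of_le_of_ne (not_lt.1 h) (hv _ (hsmem β hβ))
      refine ⟨hΦ.neg_mem (hsmem β hβ), ?_⟩
      rw [inner_neg_left]; linarith
  have hnτ : ∀ β ∈ Φ, n (τ β) = n β ∨ n (τ β) = -n β := by
    intro β hβ
    have h := hn _ (hτmem β hβ).1
    have h1 : corootPairing (s β) α = -n β := by
      rw [← hn β hβ]; exact corootPairing_reflection hα0 β
    simp only [hτ] at h ⊢
    split_ifs at h ⊢
    · right
      rw [h1] at h; exact_mod_cast h.symm
    · left
      rw [corootPairing_neg_left, h1, neg_neg] at h; exact_mod_cast h.symm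
  have heven : ((∑ β ∈ Φ.filter (fun β => 0 < ⟪β, v⟫), n β : ℤ) : ZMod 2) = 0 := by
    rw [Int.cast_sum]
    refine Finset.sum_involution (fun β _ => τ β) ?_ ?_ ?_ ?_
    · intro β hβ
      rw [mem_filter] at hβ
      rcases hnτ β hβ.1 with h | h <;> rw [h]
      · exact CharTwo.add_self_eq_zero _
      · push_cast; ring
    · intro β hβ hnβ hfix
      rw [mem_filter] at hβ
      apply hnβ
      have hnβ' := hn β hβ.1
      simp only [hτ] at hfix
      split_ifs at hfix with h
      · simp only [hs, sub_eq_self, smul_eq_zero, hα0, or_false] at hfix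
        rw [hfix] at hnβ'
        have : n β = 0 := by exact_mod_cast hnβ'.symm
        simp [this]
      · have hβα : β = ((n β : ℝ) / 2) • α := by
          have h2 : (2 : ℝ) • β = (n β : ℝ) • α := by
            simp only [hs, hnβ'] at hfix
            nth_rewrite 1 [two_smul, ← hfix]
            module
          rw [div_eq_inv_mul, mul_smul, ← h2, smul_smul]; norm_num
        rcases hΦ.reduced α hα _ (hβα ▸ hβ.1) with h3 | h3
        · have : (n β : ℝ) = 2 := by linarith
          have : n β = 2 := by exact_mod_cast this
          rw [this]; rfl
        · have : (n β : ℝ) = -2 := by linarith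
          have : n β = -2 := by exact_mod_cast this
          rw [this]; rfl
    · intro β hβ
      exact mem_filter.2 (hτmem β (mem_filter.1 hβ).1)
    · intro β hβ
      rw [mem_filter] at hβ
      have hβn : ¬ 0 < ⟪-β, v⟫ := by rw [inner_neg_left]; linarith [hβ.2]
      by_cases h : 0 < ⟪s β, v⟫
      · simp only [hτ, if_pos h, hss, if_pos hβ.2]
      · simp only [hτ, if_neg h, hsneg, hss, if_neg hβn, neg_neg]
  obtain ⟨m, hm⟩ := (ZMod.intCast_zmod_eq_zero_iff_dvd _ 2).1 heven
  refine ⟨m, ?_⟩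
  rw [corootPairing_half_sum,
    Finset.sum_congr rfl fun β hβ => hn β (mem_filter.1 hβ).1, ← Int.cast_sum, hm]
  push_cast; ring

/-- The sum of the roots pairing positively with `μ` is orthogonal to the roots orthogonal
to `μ`. -/
lemma inner_half_sum_pos_eq_zero (hΦ : IsReducedRootSystem Φ) {μ α : E} (hα : α ∈ Φ)
    (hαμ : ⟪α, μ⟫ = 0) :
    ⟪(2 : ℝ)⁻¹ • ∑ β ∈ Φ.filter (fun β => 0 < ⟪β, μ⟫), β, α⟫ = 0 := by
  have hα0 := hΦ.ne_zero hα
  rw [← corootPairing_eq_zero_iff hα0, corootPairing_half_sum]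
  refine mul_eq_zero_of_right _
    (Finset.sum_involution (fun β _ => β - corootPairing β α • α) ?_ ?_ ?_ ?_)
  · intro β _
    rw [corootPairing_reflection hα0]; ring
  · intro β _ hβ h
    rw [sub_eq_self, smul_eq_zero] at h
    exact h.elim hβ hα0
  · intro β hβ
    rw [mem_filter] at hβ ⊢
    refine ⟨hΦ.reflection_mem α hα β hβ.1, ?_⟩
    simpa [inner_sub_left, inner_smul_left, hαμ] using hβ.2
  · intro β _
    exact reflection_reflection hα0 β

/-- A regular integral vector `x` can be moved into the positive chamber, without changing its
norm or destroying integrality, so that its inner product with a dominant `μ` does not drop. -/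
lemma exists_dominant [FiniteDimensional ℝ E] (hΦ : IsReducedRootSystem Φ) {v : E} {μ x : E}
    (hμ : ∀ α ∈ Φ.filter (fun α => 0 < ⟪α, v⟫), 0 ≤ ⟪μ, α⟫)
    (hx : ∀ α ∈ Φ, ∃ n : ℤ, n ≠ 0 ∧ (n : ℝ) = corootPairing x α) :
    ∃ y : E, ‖y‖ = ‖x‖ ∧ ⟪x, μ⟫ ≤ ⟪y, μ⟫ ∧
      ∀ α ∈ Φ, 0 < ⟪α, v⟫ → 1 ≤ corootPairing y α := by
  have : ProperSpace E := FiniteDimensional.proper ℝ E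
  let S : Set E := {y | ‖y‖ = ‖x‖ ∧ ⟪x, μ⟫ ≤ ⟪y, μ⟫ ∧
    ∀ α ∈ Φ, ∃ n : ℤ, n ≠ 0 ∧ (n : ℝ) = corootPairing y α}
  have hclosed : IsClosed S := by
    have hcont : ∀ α : E, Continuous fun y => corootPairing y α := by
      intro α
      unfold corootPairing
      fun_prop
    have hint : IsClosed ((fun n : ℤ => (n : ℝ)) '' {n : ℤ | n ≠ 0}) :=
      Int.isClosedEmbedding_coe_real.isClosedMap _ (isClosed_discrete _)
    have h3 : IsClosed {y : E | ∀ α ∈ Φ, ∃ n : ℤ, n ≠ 0 ∧ (n : ℝ) = corootPairing y α} := by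
      simp only [Set.ofPred_forall]
      exact isClosed_iInter fun α => isClosed_iInter fun _ => hint.preimage (hcont α)
    have h1 : IsClosed {y : E | ‖y‖ = ‖x‖} := isClosed_eq continuous_norm continuous_const
    have h2 : IsClosed {y : E | ⟪x, μ⟫ ≤ ⟪y, μ⟫} := isClosed_le continuous_const (by fun_prop)
    exact h1.inter (h2.inter h3)
  have hcompact : IsCompact S :=
    (isCompact_closedBall (0 : E) ‖x‖).of_isClosed_subset hclosed
      fun y hy => mem_closedBall_zero_iff.2 hy.1.le
  obtain ⟨y, hy, hmax⟩ := hcompact.exists_isMaxOn ⟨x, rfl, le_rfl, hx⟩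
    (f := fun y => ⟪y, v⟫) (by fun_prop)
  refine ⟨y, hy.1, hy.2.1, fun α hα hαv => ?_⟩
  have hα0 := hΦ.ne_zero hα
  obtain ⟨n, hn0, hn⟩ := hy.2.2 α hα
  by_contra hlt
  rw [← hn, not_le] at hlt
  have hneg : n < 0 := by
    have : n < 1 := by exact_mod_cast hlt
    omega
  have hneg' : (n : ℝ) < 0 := by exact_mod_cast hneg
  have hmem : y - corootPairing y α • α ∈ S := by
    refine ⟨(norm_reflection hα0 y).trans hy.1, hy.2.1.trans ?_, fun β hβ => ?_⟩
    · rw [inner_sub_left, inner_smul_left, conj_trivial, ← hn, real_inner_comm]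
      have := hμ α (mem_filter.2 ⟨hα, hαv⟩)
      rw [real_inner_comm] at this
      nlinarith [real_inner_comm y μ]
    · rw [corootPairing_reflection_left hα0]
      exact hy.2.2 _ (hΦ.reflection_mem α hα β hβ)
  have hle : ⟪y - corootPairing y α • α, v⟫ ≤ ⟪y, v⟫ := hmax hmem
  rw [inner_sub_left, inner_smul_left, conj_trivial, ← hn] at hle
  nlinarith

end IsReducedRootSystem

theorem admissible_shift_regular_is_admissible
    {E : Type*} [NormedAddCommGroup E] [InnerProductSpace ℝ E] [FiniteDimensional ℝ E]
    (Δ : Finset E)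
    (hΔ0 : (0 : E) ∉ Δ)
    (hΔred : ∀ α ∈ Δ, ∀ t : ℝ, t • α ∈ Δ → t = 1 ∨ t = -1)
    (hΔrefl : ∀ α ∈ Δ, ∀ β ∈ Δ, β - (2 * ⟪β, α⟫ / ⟪α, α⟫) • α ∈ Δ)
    (hΔcrys : ∀ α ∈ Δ, ∀ β ∈ Δ, ∃ n : ℤ, 2 * ⟪β, α⟫ / ⟪α, α⟫ = (n : ℝ))
    (v : E) (hv : ∀ α ∈ Δ, ⟪α, v⟫ ≠ 0)
    (Δpos : Finset E) (hΔpos : Δpos = Δ.filter (fun α => 0 < ⟪α, v⟫))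
    (ρ : E) (hρ : ρ = (2 : ℝ)⁻¹ • ∑ α ∈ Δpos, α)    (μ : E) (hμ : ∀ α ∈ Δpos, 0 ≤ ⟪μ, α⟫)
    (ρμ : E) (hρμ : ρμ = (2 : ℝ)⁻¹ • ∑ α ∈ Δpos.filter (fun α => ⟪α, μ⟫ = 0), α)
    (ρμD : E) (hρμD : ρμD = (2 : ℝ)⁻¹ • ∑ α ∈ Δ.filter (fun α => 0 < ⟪α, μ⟫), α)
    (hadm : ∀ α ∈ Δ, ∃ n : ℤ, 2 * ⟪μ - ρμD, α⟫ / ⟪α, α⟫ = (n : ℝ))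
    (lam : E) (hlam : lam = μ + ρμ)
    (hreg : ∀ α ∈ Δ, ⟪lam, α⟫ ≠ 0) :
    (∀ α ∈ Δpos, 0 ≤ ⟪lam - ρ, α⟫) ∧
    lam - ρ = μ - ρμD ∧
    (∀ α ∈ Δpos, ⟪α, μ⟫ = 0 → ⟪lam - ρ, α⟫ = 0) := by
  have hΦ : IsReducedRootSystem Δ := ⟨hΔ0, hΔred, hΔrefl, hΔcrys⟩
  have hsplit : ρ = ρμ + ρμD := by
    have hpos : Δ.filter (fun α => 0 < ⟪α, μ⟫) = Δpos.filter (fun α => ¬ ⟪α, μ⟫ = 0) := by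
      ext α
      rw [hΔpos] at hμ ⊢
      simp only [mem_filter] at hμ ⊢
      constructor
      · rintro ⟨hα, hαμ⟩
        refine ⟨⟨hα, ?_⟩, hαμ.ne'⟩
        by_contra hneg
        have hlt := lt_of_le_of_ne (not_lt.1 hneg) (hv α hα)
        have h := hμ (-α) ⟨hΦ.neg_mem hα, by rw [inner_neg_left]; linarith⟩
        rw [inner_neg_right, real_inner_comm] at h
        linarith
      · rintro ⟨hα, hαμ⟩
        have h := hμ α hα
        rw [real_inner_comm] at h
        exact ⟨hα.1, lt_of_le_of_ne h (Ne.symm hαμ)⟩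
    rw [hρ, hρμ, hρμD, hpos, ← smul_add, Finset.sum_filter_add_sum_filter_not]
  have hshift : lam - ρ = μ - ρμD := by rw [hlam, hsplit]; abel
  have horth : ∀ α ∈ Δpos, ⟪α, μ⟫ = 0 → ⟪lam - ρ, α⟫ = 0 := by
    intro α hα hαμ
    rw [hΔpos, mem_filter] at hα
    rw [hshift, inner_sub_left, hρμD, hΦ.inner_half_sum_pos_eq_zero hα.1 hαμ, real_inner_comm,
      hαμ, sub_zero]
  refine ⟨?_, hshift, horth⟩
  subst hΔpos
  have hint : ∀ α ∈ Δ, ∃ n : ℤ, n ≠ 0 ∧ (n : ℝ) = corootPairing lam α := by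
    intro α hα
    obtain ⟨m, hm⟩ := hadm α hα
    obtain ⟨k, hk⟩ := hΦ.exists_int_corootPairing_half_sum hv hα
    rw [← hρ] at hk
    have hsum : ((m + k : ℤ) : ℝ) = corootPairing lam α := by
      rw [← sub_add_cancel lam ρ, corootPairing_add_left, hshift, hk, corootPairing, hm]
      push_cast; ring
    refine ⟨m + k, fun h0 => ?_, hsum⟩
    rw [h0, Int.cast_zero] at hsum
    exact hreg α hα ((corootPairing_eq_zero_iff (hΦ.ne_zero hα) lam).1 hsum.symm)
  obtain ⟨y, hynorm, hyμ, hydom⟩ := hΦ.exists_dominant hμ hint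
  have hstab : 0 ≤ ⟪y - μ - ρμ, ρμ⟫ := by
    have hfilter : (Δ.filter (fun α => 0 < ⟪α, v⟫)).filter (fun α => ⟪α, μ⟫ = 0) =
        (Δ.filter (fun α => ⟪α, μ⟫ = 0)).filter (fun α => 0 < ⟪α, v⟫) :=
      Finset.filter_comm _ _ _
    rw [hfilter] at hρμ
    have h := (hΦ.filter_inner_eq_zero μ).inner_sub_half_sum_nonneg (v := v) (d := y - μ)
      (fun α hα => hv α (mem_filter.1 hα).1) (by
        intro α hα hαv
        rw [mem_filter] at hα
        have h0 : corootPairing μ α = 0 :=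
          (corootPairing_eq_zero_iff (hΦ.ne_zero hα.1) μ).2 (by rw [real_inner_comm, hα.2])
        rw [corootPairing_sub_left, h0, sub_zero]
        exact hydom α hα.1 hαv)
    rw [← hρμ] at h
    nth_rewrite 2 [hρμ]
    rw [inner_smul_right, inner_sum]
    exact mul_nonneg (by norm_num) (Finset.sum_nonneg h)
  have hy : y = lam := by
    have hsq : ⟪y, y⟫ = ⟪lam, lam⟫ := by
      rw [real_inner_self_eq_norm_sq, real_inner_self_eq_norm_sq, hynorm]
    have hle : ⟪y - lam, y - lam⟫ ≤ 0 := by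
      rw [hlam] at hsq hyμ ⊢
      simp only [inner_sub_left, inner_sub_right, inner_add_left, inner_add_right] at *
      have := real_inner_comm y μ
      have := real_inner_comm y ρμ
      have := real_inner_comm μ ρμ
      linarith
    exact sub_eq_zero.1 (real_inner_self_nonpos.1 hle)
  rw [hρ]
  exact hΦ.inner_sub_half_sum_nonneg hv (hy ▸ hydom)
end
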